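/- Let f : ℝ² → ℝ be of class C² satisfying (i) D²f(p)(q,q) > 0 for all p, q ∈ ℝ² with q ≠ 0, and (ii) there is a constant λ > 0 with D²f(p)(q,q) ≤ λ · (ln(2+|p|)/(1+|p|)) · |q|² for all p, q ∈ ℝ². Let u ∈ C²(ℝ²) be an entire solution of div[Df(∇u)] = 0 on ℝ². Suppose there exist two linearly independent vectors E₁, E₂ ∈ ℝ² and constants 0 ≤ m < 1, K > 0 such that |∂_{E₁}u(x)| ≤ K(|∂_{E₂}u(x)|^m + 1) for all x ∈ ℝ², where ∂_{E_α}u denotes the directional derivative of u in direction E_α. Then u is an affine function. -/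

import Mathlib

open Real MeasureTheory Metric
open scoped ENNReal

noncomputable section

/-- `ℝ²` with its Euclidean structure. -/
abbrev E2 : Type := EuclideanSpace ℝ (Fin 2)

/-- The `i`-th standard basis vector of `ℝ²`. -/
def ee (i : Fin 2) : E2 := EuclideanSpace.single i 1

/-- The Hessian bilinear form `D²f(p)(q,q)`. -/
def Hess (f : E2 → ℝ) (p q : E2) : ℝ := iteratedFDeriv ℝ 2 f p ![q, q]

/-- The partial derivative `∂ᵢu(x)`. -/
def pd (u : E2 → ℝ) (i : Fin 2) (x : E2) : ℝ := fderiv ℝ u x (ee i)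

/-- The equation `div [Df(∇u)] = 0`, i.e. `∑ i, ∂ᵢ[(∂f/∂pᵢ)(∇u(x))] = 0` on `ℝ²`. -/
def solves (f u : E2 → ℝ) : Prop :=
  ∀ x : E2, ∑ i : Fin 2, fderiv ℝ (fun y => fderiv ℝ f (gradient u y) (ee i)) x (ee i) = 0

/-!
The directional derivative `w = ∂_E u` is a weak solution of the linearized equation
`div (D²f(∇u) ∇w) = 0`. Testing it with `η² g(w)` for an increasing `g` and a cutoff `η` gives the
Caccioppoli inequality `∫ η² g'(w) D²f(∇u)(∇w, ∇w) ≤ 4 M ∫ |∇η|²` as soon as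
`g(w)² D²f(∇u) ≤ M g'(w)`. For `g = arsinh` one has `g(t)² / g'(t) ≲ |t| log² |t|`, so a bound
`|w| ≲ (1 + |∇u|)^m` is compensated by any decay `D²f(p) ≲ (1 + |p|)^(-s)` with `s > m`. In the
plane, logarithmic cutoffs have arbitrarily small Dirichlet energy, hence `∇w = D²u E = 0`. A
symmetric planar `D²u` with a kernel has the form `h ν ⊗ ν`, and the equation reduces to
`h D²f(∇u)(ν, ν) = 0`, so that `D²u = 0`.
-/

section DivergenceFree

variable {V ι : Type*} [NormedAddCommGroup V] [NormedSpace ℝ V] [MeasurableSpace V]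
  {μ : Measure V}

lemma hasDerivAt_integral_comp_add_smul_mul [OpensMeasurableSpace V] [IsFiniteMeasureOnCompacts μ]
    {s ψ : V → ℝ} (hs : ContDiff ℝ 1 s) (hψ : Continuous ψ) (hψc : HasCompactSupport ψ) (v : V) :
    HasDerivAt (fun t : ℝ => ∫ x, s (x + t • v) * ψ x ∂μ) (∫ x, fderiv ℝ s x v * ψ x ∂μ) 0 := by
  have hds : Continuous fun x => fderiv ℝ s x v :=
    (hs.continuous_fderiv one_ne_zero).clm_apply continuous_const
  have hsψ (t : ℝ) : Continuous fun x => s (x + t • v) * ψ x :=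
    (hs.continuous.comp (by fun_prop)).mul hψ
  have hdsψ : Continuous fun x => fderiv ℝ s (x + (0 : ℝ) • v) v * ψ x :=
    (hds.comp (by fun_prop : Continuous fun x : V => x + (0 : ℝ) • v)).mul hψ
  have hcompact : IsCompact
      ((fun z : V × ℝ => z.1 + z.2 • v) '' (tsupport ψ ×ˢ Set.Icc (-1) 1)) :=
    (hψc.isCompact.prod isCompact_Icc).image (by fun_prop)
  obtain ⟨C, hC⟩ := hcompact.exists_bound_of_continuousOn hds.continuousOn
  have hbound (x : V) (t : ℝ) (ht : t ∈ Set.Icc (-1 : ℝ) 1) :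
      ‖fderiv ℝ s (x + t • v) v * ψ x‖ ≤ C * ‖ψ x‖ := by
    rw [norm_mul]
    by_cases hx : x ∈ tsupport ψ
    · exact mul_le_mul_of_nonneg_right (hC _ ⟨(x, t), ⟨hx, ht⟩, rfl⟩) (norm_nonneg _)
    · simp [image_eq_zero_of_notMem_tsupport hx]
  have hderiv (x : V) (t : ℝ) :
      HasDerivAt (fun t : ℝ => s (x + t • v) * ψ x) (fderiv ℝ s (x + t • v) v * ψ x) t := by
    have hline : HasDerivAt (fun t : ℝ => x + t • v) v t := by
      simpa using ((hasDerivAt_id t).smul_const v).const_add x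
    exact ((hs.differentiable one_ne_zero _).hasFDerivAt.comp_hasDerivAt t hline).mul_const _
  simpa using (hasDerivAt_integral_of_dominated_loc_of_deriv_le (μ := μ)
    (Icc_mem_nhds (by norm_num) (by norm_num))
    (.of_forall fun t => (hsψ t).aestronglyMeasurable)
    ((hsψ 0).integrable_of_hasCompactSupport hψc.mul_left)
    hdsψ.aestronglyMeasurable
    (.of_forall hbound)
    ((hψ.integrable_of_hasCompactSupport hψc).norm.const_mul C)
    (.of_forall fun x t _ => hderiv x t)).2

variable [FiniteDimensional ℝ V] [BorelSpace V] [μ.IsAddHaarMeasure] [Fintype ι]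
  {σ : ι → V → ℝ} {e : ι → V} {φ : V → ℝ}

lemma integral_sum_mul_fderiv_eq_zero_of_divergence_eq_zero (hσ : ∀ i, ContDiff ℝ 1 (σ i))
    (hdiv : ∀ x, ∑ i, fderiv ℝ (σ i) x (e i) = 0) (hφ : ContDiff ℝ 1 φ)
    (hφc : HasCompactSupport φ) :
    ∫ x, ∑ i, σ i x * fderiv ℝ φ x (e i) ∂μ = 0 := by
  have hint (i : ι) : Integrable (fun x => σ i x * fderiv ℝ φ x (e i)) μ :=
    ((hσ i).continuous.mul ((hφ.continuous_fderiv one_ne_zero).clm_apply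
      continuous_const)).integrable_of_hasCompactSupport (hφc.fderiv_apply ℝ _).mul_left
  have hint' (i : ι) : Integrable (fun x => fderiv ℝ (σ i) x (e i) * φ x) μ :=
    ((((hσ i).continuous_fderiv one_ne_zero).clm_apply continuous_const).mul
      hφ.continuous).integrable_of_hasCompactSupport hφc.mul_left
  have hparts (i : ι) : ∫ x, σ i x * fderiv ℝ φ x (e i) ∂μ
      = -∫ x, fderiv ℝ (σ i) x (e i) * φ x ∂μ :=
    integral_mul_fderiv_eq_neg_fderiv_mul_of_integrable (hint' i) (hint i)
      (((hσ i).continuous.mul hφ.continuous).integrable_of_hasCompactSupport hφc.mul_left)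
      (fun x _ => (hσ i).differentiable one_ne_zero x)
      (fun x _ => hφ.differentiable one_ne_zero x)
  calc ∫ x, ∑ i, σ i x * fderiv ℝ φ x (e i) ∂μ
      = ∑ i, ∫ x, σ i x * fderiv ℝ φ x (e i) ∂μ := integral_finsetSum _ fun i _ => hint i
    _ = -∫ x, ∑ i, fderiv ℝ (σ i) x (e i) * φ x ∂μ := by
        simp only [hparts, Finset.sum_neg_distrib, integral_finsetSum _ fun i _ => hint' i]
    _ = 0 := by simp [← Finset.sum_mul, hdiv]

-- The field and the test function are only `C¹`, so instead of integrating by parts twice one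
-- translates the field and differentiates under the integral.
lemma integral_sum_fderiv_mul_fderiv_eq_zero_of_divergence_eq_zero
    (hσ : ∀ i, ContDiff ℝ 1 (σ i)) (hdiv : ∀ x, ∑ i, fderiv ℝ (σ i) x (e i) = 0)
    (hφ : ContDiff ℝ 1 φ) (hφc : HasCompactSupport φ) (v : V) :
    ∫ x, ∑ i, fderiv ℝ (σ i) x v * fderiv ℝ φ x (e i) ∂μ = 0 := by
  have hdφ (i : ι) : Continuous fun x => fderiv ℝ φ x (e i) :=
    (hφ.continuous_fderiv one_ne_zero).clm_apply continuous_const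
  have hdφc (i : ι) : HasCompactSupport fun x => fderiv ℝ φ x (e i) := hφc.fderiv_apply ℝ _
  have htranslate (t : ℝ) : ∑ i, ∫ x, σ i (x + t • v) * fderiv ℝ φ x (e i) ∂μ = 0 := by
    have hσt (i : ι) : ContDiff ℝ 1 fun x => σ i (x + t • v) := (hσ i).comp (by fun_prop)
    have hint (i : ι) : Integrable (fun x => σ i (x + t • v) * fderiv ℝ φ x (e i)) μ :=
      ((hσt i).continuous.mul (hdφ i)).integrable_of_hasCompactSupport (hdφc i).mul_left
    rw [← integral_finsetSum _ fun i _ => hint i]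
    refine integral_sum_mul_fderiv_eq_zero_of_divergence_eq_zero hσt (fun x => ?_) hφ hφc
    simpa only [fderiv_comp_add_right] using hdiv (x + t • v)
  have hderiv := HasDerivAt.fun_sum (u := Finset.univ) fun i _ =>
    hasDerivAt_integral_comp_add_smul_mul (μ := μ) (hσ i) (hdφ i) (hdφc i) v
  simp only [htranslate] at hderiv
  have hint (i : ι) : Integrable (fun x => fderiv ℝ (σ i) x v * fderiv ℝ φ x (e i)) μ :=
    ((((hσ i).continuous_fderiv one_ne_zero).clm_apply continuous_const).mul
      (hdφ i)).integrable_of_hasCompactSupport (hdφc i).mul_left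
  rw [integral_finsetSum _ fun i _ => hint i]
  exact hderiv.unique (hasDerivAt_const _ _)

end DivergenceFree

section LogCutoff

lemma hasCompactSupport_sq {X : Type*} [TopologicalSpace X] {φ : X → ℝ}
    (hφ : HasCompactSupport φ) : HasCompactSupport fun x => φ x ^ 2 :=
  hφ.comp_left (g := fun t : ℝ => t ^ 2) (zero_pow two_ne_zero)

variable {V : Type*} [NormedAddCommGroup V]

/-- A smooth profile on the line, equal to `1` on `[-1, 1]` and supported in `[-2, 2]`. -/
def cutoffProfile : ContDiffBump (0 : ℝ) := ⟨1, 2, one_pos, one_lt_two⟩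

/-- The logarithmic cutoff, equal to `1` where `log (1 + ‖x‖²) ≤ L` and supported in the ball of
radius `exp L`. In dimension two its Dirichlet energy tends to `0` as `L → ∞`. -/
def logCutoff (L : ℝ) (x : V) : ℝ := cutoffProfile (log (1 + ‖x‖ ^ 2) / L)

lemma logCutoff_eq_one {L : ℝ} (hL : 0 < L) {x : V} (hx : log (1 + ‖x‖ ^ 2) ≤ L) :
    logCutoff L x = 1 := by
  have h0 : 0 ≤ log (1 + ‖x‖ ^ 2) := log_nonneg (by nlinarith [sq_nonneg ‖x‖])
  refine cutoffProfile.one_of_mem_closedBall ?_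
  rw [mem_closedBall_zero_iff, norm_of_nonneg (div_nonneg h0 hL.le)]
  exact (div_le_one hL).2 hx

lemma logCutoff_eq_zero {L : ℝ} (hL : 0 < L) {x : V} (hx : exp L ≤ ‖x‖) :
    logCutoff L x = 0 := by
  have hlog : 2 ≤ log (1 + ‖x‖ ^ 2) / L := by
    rw [le_div_iff₀ hL, le_log_iff_exp_le (by positivity), two_mul, exp_add]
    nlinarith [exp_pos L]
  refine cutoffProfile.zero_of_le_dist ?_
  rw [dist_zero_right, norm_of_nonneg (zero_le_two.trans hlog)]
  exact hlog

lemma tsupport_logCutoff_subset {L : ℝ} (hL : 0 < L) :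
    tsupport (logCutoff L : V → ℝ) ⊆ closedBall 0 (exp L) := by
  refine closure_minimal (fun x hx => ?_) isClosed_closedBall
  rw [mem_closedBall_zero_iff]
  exact le_of_not_ge fun h => hx (logCutoff_eq_zero hL h)

lemma hasCompactSupport_logCutoff [ProperSpace V] {L : ℝ} (hL : 0 < L) :
    HasCompactSupport (logCutoff L : V → ℝ) :=
  (isCompact_closedBall 0 (exp L)).of_isClosed_subset (isClosed_tsupport _)
    (tsupport_logCutoff_subset hL)

variable [InnerProductSpace ℝ V]

lemma contDiff_logCutoff (L : ℝ) : ContDiff ℝ 1 (logCutoff L : V → ℝ) :=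
  cutoffProfile.contDiff.comp <|
    ((contDiff_const.add (contDiff_norm_sq ℝ)).log fun x => by positivity).div_const L

lemma fderiv_logCutoff (L : ℝ) (x : V) :
    fderiv ℝ (logCutoff L) x
      = (deriv cutoffProfile (log (1 + ‖x‖ ^ 2) / L) * (2 / (L * (1 + ‖x‖ ^ 2)))) •
        innerSL ℝ x := by
  have hne : 1 + ‖x‖ ^ 2 ≠ 0 := by positivity
  have hlog := (((hasStrictFDerivAt_norm_sq x).hasFDerivAt.const_add 1).log hne).mul_const L⁻¹
  have hprofile : HasDerivAt cutoffProfile _ (log (1 + ‖x‖ ^ 2) * L⁻¹) :=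
    (cutoffProfile.contDiff.differentiable one_ne_zero _).hasDerivAt
  refine (hprofile.comp_hasFDerivAt x hlog).fderiv.trans ?_
  ext v
  simp only [smul_apply, coe_innerSL_apply, nsmul_eq_mul, Nat.cast_ofNat, smul_eq_mul,
    div_eq_mul_inv, mul_inv_rev]
  ring

lemma exists_norm_fderiv_logCutoff_sq_le :
    ∃ C : ℝ, 0 ≤ C ∧ ∀ (L : ℝ) (x : V),
      ‖fderiv ℝ (logCutoff L) x‖ ^ 2 ≤ C / L ^ 2 * (1 + ‖x‖ ^ 2)⁻¹ := by
  obtain ⟨C, hC⟩ := ((cutoffProfile.contDiff (n := 1)).continuous_deriv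
    le_rfl).bounded_above_of_compact_support cutoffProfile.hasCompactSupport.deriv
  refine ⟨4 * C ^ 2, by positivity, fun L x => ?_⟩
  have hderiv : deriv cutoffProfile (log (1 + ‖x‖ ^ 2) / L) ^ 2 ≤ C ^ 2 := by
    simpa using pow_le_pow_left₀ (norm_nonneg _) (hC (log (1 + ‖x‖ ^ 2) / L)) 2
  have hratio : ‖x‖ ^ 2 / (1 + ‖x‖ ^ 2) ≤ 1 := (div_le_one (by positivity)).2 (by linarith)
  calc ‖fderiv ℝ (logCutoff L) x‖ ^ 2
      = deriv cutoffProfile (log (1 + ‖x‖ ^ 2) / L) ^ 2 *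
          (4 / L ^ 2 * ((1 + ‖x‖ ^ 2)⁻¹ * (‖x‖ ^ 2 / (1 + ‖x‖ ^ 2)))) := by
        rw [fderiv_logCutoff, norm_smul, innerSL_apply_norm, mul_pow, norm_eq_abs, sq_abs]
        field_simp
        ring
    _ ≤ C ^ 2 * (4 / L ^ 2 * ((1 + ‖x‖ ^ 2)⁻¹ * 1)) := by gcongr
    _ = 4 * C ^ 2 / L ^ 2 * (1 + ‖x‖ ^ 2)⁻¹ := by ring

variable [FiniteDimensional ℝ V] [MeasurableSpace V] [BorelSpace V] {μ : Measure V}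
  [μ.IsAddHaarMeasure]

lemma setIntegral_closedBall_inv_one_add_norm_sq (hV : Module.finrank ℝ V = 2) {ρ : ℝ}
    (hρ : 0 ≤ ρ) :
    ∫ x in closedBall (0 : V) ρ, (1 + ‖x‖ ^ 2)⁻¹ ∂μ
      = μ.real (ball 0 1) * log (1 + ρ ^ 2) := by
  have : Nontrivial V := Module.nontrivial_of_finrank_pos (R := ℝ) (by lia)
  have hne (r : ℝ) : 1 + r ^ 2 ≠ 0 := by positivity
  have hradial : (closedBall (0 : V) ρ).indicator (fun x => (1 + ‖x‖ ^ 2)⁻¹)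
      = fun x => (Set.Iic ρ).indicator (fun r : ℝ => (1 + r ^ 2)⁻¹) ‖x‖ := by
    ext x
    by_cases hx : ‖x‖ ≤ ρ <;> simp [hx]
  have hprimitive (r : ℝ) : HasDerivAt (fun r => log (1 + r ^ 2) / 2) (r * (1 + r ^ 2)⁻¹) r := by
    convert! (((hasDerivAt_pow 2 r).const_add 1).log (hne r)).div_const 2 using 1
    simp only [Nat.cast_ofNat, Nat.add_one_sub_one, pow_one]
    field_simp
  have hcont : Continuous fun r : ℝ => r * (1 + r ^ 2)⁻¹ :=
    continuous_id.mul ((by fun_prop : Continuous fun r : ℝ => 1 + r ^ 2).inv₀ hne)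
  have hindicator (r : ℝ) : r * (Set.Iic ρ).indicator (fun r => (1 + r ^ 2)⁻¹) r
      = (Set.Iic ρ).indicator (fun r => r * (1 + r ^ 2)⁻¹) r := by
    by_cases hr : r ≤ ρ <;> simp [hr]
  have hint : ∫ r in Set.Ioi (0 : ℝ), r * (Set.Iic ρ).indicator (fun r => (1 + r ^ 2)⁻¹) r
      = log (1 + ρ ^ 2) / 2 := by
    simp only [hindicator]
    rw [setIntegral_indicator measurableSet_Iic, Set.Ioi_inter_Iic,
      ← intervalIntegral.integral_of_le hρ, intervalIntegral.integral_eq_sub_of_hasDerivAt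
        (fun r _ => hprimitive r) (hcont.intervalIntegrable _ _)]
    simp
  rw [← integral_indicator measurableSet_closedBall, hradial, integral_fun_norm_addHaar, hV]
  simp only [Nat.add_one_sub_one, pow_one, smul_eq_mul, nsmul_eq_mul, hint]
  ring

lemma tendsto_integral_norm_fderiv_logCutoff_sq (hV : Module.finrank ℝ V = 2) :
    Filter.Tendsto (fun L : ℝ => ∫ x : V, ‖fderiv ℝ (logCutoff L) x‖ ^ 2 ∂μ) Filter.atTop
      (nhds 0) := by
  obtain ⟨C, hC0, hC⟩ := exists_norm_fderiv_logCutoff_sq_le (V := V)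
  have hbound {L : ℝ} (hL : 1 ≤ L) :
      ∫ x : V, ‖fderiv ℝ (logCutoff L) x‖ ^ 2 ∂μ ≤ 3 * C * μ.real (ball (0 : V) 1) / L := by
    have hL0 : 0 < L := by linarith
    have hsupport (x : V) (hx : x ∉ closedBall 0 (exp L)) :
        ‖fderiv ℝ (logCutoff L) x‖ ^ 2 = 0 := by
      have : fderiv ℝ (logCutoff L) x = 0 := by
        by_contra h
        exact hx (tsupport_logCutoff_subset hL0 (support_fderiv_subset ℝ h))
      simp [this]
    have hlog : log (1 + exp L ^ 2) ≤ 3 * L := by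
      have htwo : 2 ≤ exp L := by linarith [add_one_le_exp L]
      rw [log_le_iff_le_exp (by positivity), show exp (3 * L) = exp L ^ 3 by
        rw [← exp_nat_mul]; norm_num]
      nlinarith [mul_le_mul_of_nonneg_left htwo (sq_nonneg (exp L))]
    calc ∫ x : V, ‖fderiv ℝ (logCutoff L) x‖ ^ 2 ∂μ
        = ∫ x in closedBall (0 : V) (exp L), ‖fderiv ℝ (logCutoff L) x‖ ^ 2 ∂μ :=
          (setIntegral_eq_integral_of_forall_compl_eq_zero hsupport).symm
      _ ≤ ∫ x in closedBall (0 : V) (exp L), C / L ^ 2 * (1 + ‖x‖ ^ 2)⁻¹ ∂μ := by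
          refine setIntegral_mono ?_ ?_ (hC L)
          · exact (((contDiff_logCutoff L).continuous_fderiv one_ne_zero).norm.pow
              2).continuousOn.integrableOn_compact (isCompact_closedBall _ _)
          · exact (continuous_const.mul ((by fun_prop : Continuous fun x : V => 1 + ‖x‖ ^ 2).inv₀
              fun x => by positivity)).continuousOn.integrableOn_compact (isCompact_closedBall _ _)
      _ = C / L ^ 2 * (μ.real (ball (0 : V) 1) * log (1 + exp L ^ 2)) := by
          rw [integral_const_mul, setIntegral_closedBall_inv_one_add_norm_sq hV (exp_pos L).le]
      _ ≤ C / L ^ 2 * (μ.real (ball (0 : V) 1) * (3 * L)) := by gcongr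
      _ = 3 * C * μ.real (ball (0 : V) 1) / L := by field_simp
  refine squeeze_zero' (.of_forall fun L => integral_nonneg fun x => by positivity)
    ((Filter.eventually_ge_atTop 1).mono fun L => hbound) ?_
  exact Filter.Tendsto.const_div_atTop Filter.tendsto_id _

theorem eq_zero_of_integral_sq_mul_le_integral_norm_fderiv_sq (hV : Module.finrank ℝ V = 2)
    {P : V → ℝ} (hP : Continuous P) (hP0 : ∀ x, 0 ≤ P x) {C : ℝ}
    (hle : ∀ η : V → ℝ, ContDiff ℝ 1 η → HasCompactSupport η →
      ∫ x, η x ^ 2 * P x ∂μ ≤ C * ∫ x, ‖fderiv ℝ η x‖ ^ 2 ∂μ) (x : V) :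
    P x = 0 := by
  have hint (R : ℝ) : IntegrableOn P (ball 0 R) μ :=
    (hP.continuousOn.integrableOn_compact (isCompact_closedBall 0 R)).mono_set
      ball_subset_closedBall
  have hcutoff (R L : ℝ) (hL : 0 < L) (hRL : log (1 + R ^ 2) ≤ L) :
      ∫ y in ball (0 : V) R, P y ∂μ ≤ C * ∫ y : V, ‖fderiv ℝ (logCutoff L) y‖ ^ 2 ∂μ := by
    have hη := contDiff_logCutoff (V := V) L
    have hηc := hasCompactSupport_logCutoff (V := V) hL
    have hone (y : V) (hy : y ∈ ball 0 R) : P y = logCutoff L y ^ 2 * P y := by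
      have hlog : log (1 + ‖y‖ ^ 2) ≤ log (1 + R ^ 2) := by
        have := (mem_ball_zero_iff.1 hy).le
        gcongr
      rw [logCutoff_eq_one hL (hlog.trans hRL), one_pow, one_mul]
    calc ∫ y in ball (0 : V) R, P y ∂μ
        = ∫ y in ball (0 : V) R, logCutoff L y ^ 2 * P y ∂μ :=
          setIntegral_congr_fun measurableSet_ball hone
      _ ≤ ∫ y, logCutoff L y ^ 2 * P y ∂μ :=
          setIntegral_le_integral
            (((hη.continuous.pow 2).mul hP).integrable_of_hasCompactSupport
              (hasCompactSupport_sq hηc).mul_right)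
            (.of_forall fun y => mul_nonneg (sq_nonneg _) (hP0 y))
      _ ≤ _ := hle _ hη hηc
  have hball (R : ℝ) : ∫ y in ball (0 : V) R, P y ∂μ = 0 := by
    refine le_antisymm ?_ (integral_nonneg hP0)
    have hlim : Filter.Tendsto (fun L : ℝ => C * ∫ y : V, ‖fderiv ℝ (logCutoff L) y‖ ^ 2 ∂μ)
        Filter.atTop (nhds 0) := by
      simpa using (tendsto_integral_norm_fderiv_logCutoff_sq hV).const_mul C
    refine ge_of_tendsto hlim ?_
    filter_upwards [Filter.eventually_gt_atTop 0, Filter.eventually_ge_atTop (log (1 + R ^ 2))]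
      with L using hcutoff R L
  have hae := (setIntegral_eq_zero_iff_of_nonneg_ae (.of_forall hP0) (hint (‖x‖ + 1))).1 (hball _)
  exact Measure.eqOn_open_of_ae_eq hae isOpen_ball hP.continuousOn continuousOn_const (by simp)

end LogCutoff

section GradientCalculus

lemma fderiv_fderiv_comm {V : Type*} [NormedAddCommGroup V] [NormedSpace ℝ V] {φ : V → ℝ}
    (hφ : ContDiff ℝ 2 φ) (x v w : V) :
    fderiv ℝ (fderiv ℝ φ) x v w = fderiv ℝ (fderiv ℝ φ) x w v :=
  (hφ.contDiffAt.isSymmSndFDerivAt (by simp)).eq v w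

variable {V : Type*} [NormedAddCommGroup V] [InnerProductSpace ℝ V] [CompleteSpace V]

lemma norm_gradient_eq_norm_fderiv (φ : V → ℝ) (x : V) : ‖gradient φ x‖ = ‖fderiv ℝ φ x‖ :=
  LinearIsometryEquiv.norm_map _ _

lemma contDiff_gradient {m n : WithTop ℕ∞} {φ : V → ℝ} (hφ : ContDiff ℝ n φ) (hmn : m + 1 ≤ n) :
    ContDiff ℝ m (gradient φ) :=
  (InnerProductSpace.toDual ℝ V).symm.contDiff.comp (hφ.fderiv_right hmn)

lemma hasCompactSupport_gradient {φ : V → ℝ} (hφ : HasCompactSupport φ) :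
    HasCompactSupport (gradient φ) :=
  (hφ.fderiv ℝ).comp_left (g := (InnerProductSpace.toDual ℝ V).symm) (map_zero _)

lemma gradient_sq_mul_comp {η w : V → ℝ} {g : ℝ → ℝ} {x : V} (hη : DifferentiableAt ℝ η x)
    (hw : DifferentiableAt ℝ w x) (hg : DifferentiableAt ℝ g (w x)) :
    gradient (fun y => η y ^ 2 * g (w y)) x
      = (2 * η x * g (w x)) • gradient η x + (η x ^ 2 * deriv g (w x)) • gradient w x := by
  refine ext_inner_right ℝ fun v => ?_
  have h := (hη.hasFDerivAt.pow 2).mul (hg.hasDerivAt.comp_hasFDerivAt x hw.hasFDerivAt)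
  have hfderiv : fderiv ℝ (fun y => η y ^ 2 * g (w y)) x = _ := h.fderiv
  rw [inner_gradient_left, hfderiv]
  simp only [Function.comp_apply, Nat.add_one_sub_one, pow_one, nsmul_eq_mul, Nat.cast_ofNat,
    add_apply, smul_apply, smul_eq_mul, inner_add_left, real_inner_smul_left, inner_gradient_left]
  ring

lemma inner_fderiv_gradient (φ : V → ℝ) (x v w : V) :
    inner ℝ (fderiv ℝ (gradient φ) x v) w = fderiv ℝ (fderiv ℝ φ) x v w := by
  have h : fderiv ℝ (gradient φ) x = _ :=
    (InnerProductSpace.toDual ℝ V).symm.comp_fderiv (f := fderiv ℝ φ) (x := x)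
  rw [h]
  exact InnerProductSpace.toDual_symm_apply

lemma isSymmetric_fderiv_gradient {φ : V → ℝ} (hφ : ContDiff ℝ 2 φ) (x : V) :
    (fderiv ℝ (gradient φ) x : V →ₗ[ℝ] V).IsSymmetric := fun v w => by
  rw [← real_inner_comm v, ContinuousLinearMap.coe_coe, inner_fderiv_gradient,
    inner_fderiv_gradient, fderiv_fderiv_comm hφ]

lemma gradient_fderiv_apply {φ : V → ℝ} (hφ : ContDiff ℝ 2 φ) (x v : V) :
    gradient (fun y => fderiv ℝ φ y v) x = fderiv ℝ (gradient φ) x v := by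
  have hdφ : DifferentiableAt ℝ (fderiv ℝ φ) x :=
    (hφ.fderiv_right (m := 1) (by norm_num)).differentiable one_ne_zero x
  refine ext_inner_right ℝ fun w => ?_
  rw [inner_fderiv_gradient, fderiv_fderiv_comm hφ, inner_gradient_left,
    fderiv_clm_apply hdφ (differentiableAt_const v)]
  simp

lemma exists_eq_inner_add_of_fderiv_gradient_eq_zero {φ : V → ℝ} (hφ : ContDiff ℝ 2 φ)
    (h : ∀ x, fderiv ℝ (gradient φ) x = 0) :
    ∃ (a : V) (c : ℝ), ∀ x, φ x = inner ℝ a x + c := by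
  have hgrad (x : V) : gradient φ x = gradient φ 0 :=
    is_const_of_fderiv_eq_zero ((contDiff_gradient hφ (by norm_num)).differentiable one_ne_zero) h
      x 0
  have hlinear (x : V) : HasFDerivAt (fun y => φ y - inner ℝ (gradient φ 0) y)
      (0 : V →L[ℝ] ℝ) x := by
    convert! (hφ.differentiable two_ne_zero x).hasFDerivAt.sub
      (innerSL ℝ (gradient φ 0)).hasFDerivAt using 1
    ext v
    simp [← hgrad x, inner_gradient_left]
  refine ⟨gradient φ 0, φ 0, fun x => ?_⟩
  have := is_const_of_fderiv_eq_zero (fun x => (hlinear x).differentiableAt)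
    (fun x => (hlinear x).fderiv) x 0
  rw [inner_zero_right] at this
  linarith

end GradientCalculus

section Liouville

variable {V : Type*} [NormedAddCommGroup V] [InnerProductSpace ℝ V] [CompleteSpace V]
  [MeasurableSpace V] {μ : Measure V} {A : V → V →L[ℝ] V →L[ℝ] ℝ} {w : V → ℝ} {g : ℝ → ℝ} {M : ℝ}

/-- `w` is a weak solution of `div (A ∇w) = 0`, where the coefficient matrix is encoded as the
field of bilinear forms `A x p q = ⟪A(x) p, q⟫`. -/
def IsWeakSolution (μ : Measure V) (A : V → V →L[ℝ] V →L[ℝ] ℝ) (w : V → ℝ) : Prop :=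
  ∀ φ : V → ℝ, ContDiff ℝ 1 φ → HasCompactSupport φ →
    ∫ x, A x (gradient w x) (gradient φ x) ∂μ = 0

-- Completing the square: `0 ≤ B (t d p + 2 s q) (t d p + 2 s q)`.
lemma half_sq_mul_sub_le_of_sq_mul_le {E : Type*} [NormedAddCommGroup E] [NormedSpace ℝ E]
    {B : E →L[ℝ] E →L[ℝ] ℝ} (hsymm : ∀ p q, B p q = B q p) (hnonneg : ∀ q, 0 ≤ B q q)
    {s d : ℝ} (hd : 0 < d) {q : E} (hM : s ^ 2 * B q q ≤ M * d * ‖q‖ ^ 2) (t : ℝ) (p : E) :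
    t ^ 2 * (d * B p p) / 2 - 2 * M * ‖q‖ ^ 2 ≤ B p ((2 * t * s) • q + (t ^ 2 * d) • p) := by
  have hsq := hnonneg ((t * d) • p + (2 * s) • q)
  simp only [map_add, map_smul, add_apply, smul_apply, smul_eq_mul, hsymm q p] at hsq ⊢
  refine le_of_mul_le_mul_left ?_ hd
  nlinarith

lemma IsWeakSolution.caccioppoli [OpensMeasurableSpace V] [IsFiniteMeasureOnCompacts μ]
    (hweak : IsWeakSolution μ A w) (hA : Continuous A) (hsymm : ∀ x p q, A x p q = A x q p)
    (hnonneg : ∀ x q, 0 ≤ A x q q) (hw : ContDiff ℝ 1 w) (hg : ContDiff ℝ 1 g)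
    (hg' : ∀ t, 0 < deriv g t) (hM : ∀ x q, g (w x) ^ 2 * A x q q ≤ M * deriv g (w x) * ‖q‖ ^ 2)
    {η : V → ℝ} (hη : ContDiff ℝ 1 η) (hηc : HasCompactSupport η) :
    ∫ x, η x ^ 2 * (deriv g (w x) * A x (gradient w x) (gradient w x)) ∂μ
      ≤ 4 * M * ∫ x, ‖fderiv ℝ η x‖ ^ 2 ∂μ := by
  have hdw : Continuous (gradient w) := (contDiff_gradient (m := 0) hw le_rfl).continuous
  have hsqc : HasCompactSupport fun x => η x ^ 2 := hasCompactSupport_sq hηc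
  have hφ : ContDiff ℝ 1 fun x => η x ^ 2 * g (w x) := (hη.pow 2).mul (hg.comp hw)
  have hφc : HasCompactSupport fun x => η x ^ 2 * g (w x) := hsqc.mul_right
  have henergy : Integrable
      (fun x => η x ^ 2 * (deriv g (w x) * A x (gradient w x) (gradient w x))) μ :=
    ((hη.continuous.pow 2).mul (((hg.continuous_deriv le_rfl).comp hw.continuous).mul
      ((hA.clm_apply hdw).clm_apply hdw))).integrable_of_hasCompactSupport hsqc.mul_right
  have hdirichlet : Integrable (fun x => ‖fderiv ℝ η x‖ ^ 2) μ :=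
    ((hη.continuous_fderiv one_ne_zero).norm.pow 2).integrable_of_hasCompactSupport
      (hasCompactSupport_sq (hηc.fderiv ℝ).norm)
  have htested : Integrable
      (fun x => A x (gradient w x) (gradient (fun y => η y ^ 2 * g (w y)) x)) μ := by
    refine ((hA.clm_apply hdw).clm_apply (contDiff_gradient (m := 0) hφ
      le_rfl).continuous).integrable_of_hasCompactSupport ?_
    exact (hasCompactSupport_gradient hφc).mono fun x hx hx0 => hx (by simp [hx0])
  have hpointwise (x : V) : η x ^ 2 * (deriv g (w x) * A x (gradient w x) (gradient w x)) / 2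
        - 2 * M * ‖fderiv ℝ η x‖ ^ 2
      ≤ A x (gradient w x) (gradient (fun y => η y ^ 2 * g (w y)) x) := by
    rw [gradient_sq_mul_comp (hη.differentiable one_ne_zero x) (hw.differentiable one_ne_zero x)
      (hg.differentiable one_ne_zero _), ← norm_gradient_eq_norm_fderiv]
    exact half_sq_mul_sub_le_of_sq_mul_le (hsymm x) (hnonneg x) (hg' _) (hM x _) _ _
  have hle := integral_mono ((henergy.div_const 2).sub (hdirichlet.const_mul (2 * M))) htested
    hpointwise
  simp only [Pi.sub_apply] at hle
  rw [hweak _ hφ hφc, integral_sub (henergy.div_const 2) (hdirichlet.const_mul (2 * M)),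
    integral_div, integral_const_mul] at hle
  linarith

theorem IsWeakSolution.energy_eq_zero [FiniteDimensional ℝ V] [BorelSpace V] [μ.IsAddHaarMeasure]
    (hweak : IsWeakSolution μ A w) (hV : Module.finrank ℝ V = 2) (hA : Continuous A)
    (hsymm : ∀ x p q, A x p q = A x q p) (hnonneg : ∀ x q, 0 ≤ A x q q) (hw : ContDiff ℝ 1 w)
    (hg : ContDiff ℝ 1 g) (hg' : ∀ t, 0 < deriv g t)
    (hM : ∀ x q, g (w x) ^ 2 * A x q q ≤ M * deriv g (w x) * ‖q‖ ^ 2) (x : V) :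
    A x (gradient w x) (gradient w x) = 0 := by
  have hdw : Continuous (gradient w) := (contDiff_gradient (m := 0) hw le_rfl).continuous
  have hP : Continuous fun x => deriv g (w x) * A x (gradient w x) (gradient w x) :=
    ((hg.continuous_deriv le_rfl).comp hw.continuous).mul ((hA.clm_apply hdw).clm_apply hdw)
  have hzero := eq_zero_of_integral_sq_mul_le_integral_norm_fderiv_sq (μ := μ) hV hP
    (fun x => mul_nonneg (hg' _).le (hnonneg _ _))
    (fun η => hweak.caccioppoli hA hsymm hnonneg hw hg hg' hM) x
  exact (mul_eq_zero.1 hzero).resolve_left (hg' _).ne'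

end Liouville

section Growth

lemma abs_arsinh_le_log (t : ℝ) : |arsinh t| ≤ log (2 * √(1 + t ^ 2)) := by
  rw [le_log_iff_exp_le (by positivity), ← cosh_arsinh, ← cosh_abs, cosh_eq]
  linarith [exp_pos (-|arsinh t|)]

lemma arsinh_sq_mul_sqrt_le_rpow {δ : ℝ} (hδ : 0 < δ) (t : ℝ) :
    arsinh t ^ 2 * √(1 + t ^ 2) ≤ (2 ^ δ / δ) ^ 2 * √(1 + t ^ 2) ^ (1 + 2 * δ) := by
  have hc : 0 < √(1 + t ^ 2) := by positivity
  have habs : |arsinh t| ≤ 2 ^ δ / δ * √(1 + t ^ 2) ^ δ := by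
    calc |arsinh t| ≤ log (2 * √(1 + t ^ 2)) := abs_arsinh_le_log t
      _ ≤ (2 * √(1 + t ^ 2)) ^ δ / δ := log_le_rpow_div (by positivity) hδ
      _ = 2 ^ δ / δ * √(1 + t ^ 2) ^ δ := by rw [mul_rpow zero_le_two hc.le, mul_div_right_comm]
  calc arsinh t ^ 2 * √(1 + t ^ 2)
      ≤ (2 ^ δ / δ * √(1 + t ^ 2) ^ δ) ^ 2 * √(1 + t ^ 2) := by
        rw [← sq_abs (arsinh t)]
        gcongr
    _ = (2 ^ δ / δ) ^ 2 * √(1 + t ^ 2) ^ (1 + 2 * δ) := by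
        rw [rpow_add hc, rpow_one, two_mul, rpow_add hc]
        ring

lemma deriv_arsinh (t : ℝ) : deriv arsinh t = (√(1 + t ^ 2))⁻¹ := (hasDerivAt_arsinh t).deriv

lemma exists_arsinh_sq_le_rpow_mul_deriv_arsinh {m s : ℝ} (hm : 0 ≤ m) (hms : m < s) (K : ℝ) :
    ∃ M : ℝ, ∀ r t : ℝ, 0 ≤ r → |t| ≤ K * (1 + r) ^ m →
      arsinh t ^ 2 ≤ M * (1 + r) ^ s * deriv arsinh t := by
  obtain ⟨δ, hδ, hδs⟩ : ∃ δ > 0, m * (1 + 2 * δ) ≤ s := by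
    refine ⟨(s - m) / (2 * (m + 1)), div_pos (by linarith) (by linarith), ?_⟩
    have : m / (m + 1) * (s - m) ≤ 1 * (s - m) :=
      mul_le_mul_of_nonneg_right ((div_le_one (by linarith)).2 (by linarith)) (by linarith)
    calc m * (1 + 2 * ((s - m) / (2 * (m + 1)))) = m + m / (m + 1) * (s - m) := by field_simp
      _ ≤ s := by linarith
  refine ⟨(2 ^ δ / δ) ^ 2 * (1 + K) ^ (1 + 2 * δ), fun r t hr ht => ?_⟩
  have hr0 : 0 < 1 + r := by linarith
  have hpow : 1 ≤ (1 + r) ^ m := one_le_rpow (by linarith) hm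
  have hK : 0 ≤ K := nonneg_of_mul_nonneg_left ((abs_nonneg t).trans ht) (by positivity)
  have hsqrt : √(1 + t ^ 2) ≤ (1 + K) * (1 + r) ^ m := by
    refine (sqrt_le_left (by positivity)).2 ?_
    nlinarith [sq_abs t, abs_nonneg t]
  rw [deriv_arsinh, ← div_eq_mul_inv, le_div_iff₀ (by positivity)]
  calc arsinh t ^ 2 * √(1 + t ^ 2)
      ≤ (2 ^ δ / δ) ^ 2 * √(1 + t ^ 2) ^ (1 + 2 * δ) := arsinh_sq_mul_sqrt_le_rpow hδ t
    _ ≤ (2 ^ δ / δ) ^ 2 * ((1 + K) * (1 + r) ^ m) ^ (1 + 2 * δ) := by gcongr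
    _ = (2 ^ δ / δ) ^ 2 * (1 + K) ^ (1 + 2 * δ) * (1 + r) ^ (m * (1 + 2 * δ)) := by
        rw [mul_rpow (by positivity) (by positivity), ← rpow_mul hr0.le, mul_assoc]
    _ ≤ (2 ^ δ / δ) ^ 2 * (1 + K) ^ (1 + 2 * δ) * (1 + r) ^ s := by
        gcongr
        linarith

lemma log_two_add_div_one_add_le {r s : ℝ} (hr : 0 ≤ r) (hs : s < 1) :
    log (2 + r) / (1 + r) ≤ 2 ^ (1 - s) / (1 - s) * (1 + r) ^ (-s) := by
  have hr0 : 0 < 1 + r := by linarith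
  have hs0 : 0 < 1 - s := by linarith
  rw [div_le_iff₀ hr0]
  calc log (2 + r) ≤ (2 + r) ^ (1 - s) / (1 - s) := log_le_rpow_div (by linarith) hs0
    _ ≤ (2 * (1 + r)) ^ (1 - s) / (1 - s) := by
        gcongr
        linarith
    _ = 2 ^ (1 - s) / (1 - s) * (1 + r) ^ (-s) * (1 + r) := by
        rw [mul_rpow zero_le_two hr0.le, sub_eq_neg_add, rpow_add hr0, rpow_one]
        ring

lemma abs_fderiv_rpow_add_one_le {V : Type*} [NormedAddCommGroup V] [NormedSpace ℝ V] {m : ℝ}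
    (hm : 0 ≤ m) (φ : V → ℝ) (x v : V) :
    |fderiv ℝ φ x v| ^ m + 1 ≤ (‖v‖ ^ m + 1) * (1 + ‖fderiv ℝ φ x‖) ^ m := by
  have hpow : |fderiv ℝ φ x v| ^ m ≤ ‖v‖ ^ m * (1 + ‖fderiv ℝ φ x‖) ^ m := by
    rw [← mul_rpow (norm_nonneg _) (by positivity)]
    gcongr
    nlinarith [(fderiv ℝ φ x).le_opNorm v, norm_eq_abs (fderiv ℝ φ x v), norm_nonneg v]
  linarith [one_le_rpow (by linarith [norm_nonneg (fderiv ℝ φ x)] : 1 ≤ 1 + ‖fderiv ℝ φ x‖) hm]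

end Growth

section LinearizedEquation

variable {V ι : Type*} [NormedAddCommGroup V] [InnerProductSpace ℝ V] [Fintype ι]
  {f u : V → ℝ} {b : OrthonormalBasis ι ℝ V}

lemma fderiv_fderiv_gradient_apply [CompleteSpace V] (hf : ContDiff ℝ 2 f) (hu : ContDiff ℝ 2 u)
    (x v e : V) :
    fderiv ℝ (fun y => fderiv ℝ f (gradient u y) e) x v
      = fderiv ℝ (fderiv ℝ f) (gradient u x) (fderiv ℝ (gradient u) x v) e := by
  have hdf : DifferentiableAt ℝ (fderiv ℝ f) (gradient u x) :=
    (hf.fderiv_right (m := 1) (by norm_num)).differentiable one_ne_zero _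
  have hdu : DifferentiableAt ℝ (gradient u) x :=
    (contDiff_gradient hu (by norm_num)).differentiable one_ne_zero x
  have hchain : fderiv ℝ (fun y => fderiv ℝ f (gradient u y) e) x = _ :=
    ((hdf.hasFDerivAt.comp x hdu.hasFDerivAt).clm_apply (hasFDerivAt_const e x)).fderiv
  rw [hchain]
  simp

lemma isWeakSolution_fderiv_apply [FiniteDimensional ℝ V] [MeasurableSpace V] [BorelSpace V]
    {μ : Measure V} [μ.IsAddHaarMeasure] (hf : ContDiff ℝ 2 f) (hu : ContDiff ℝ 2 u)
    (heq : ∀ x, ∑ i, fderiv ℝ (fun y => fderiv ℝ f (gradient u y) (b i)) x (b i) = 0) (v : V) :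
    IsWeakSolution μ (fun x => fderiv ℝ (fderiv ℝ f) (gradient u x))
      (fun y => fderiv ℝ u y v) := by
  intro φ hφ hφc
  have hσ (i : ι) : ContDiff ℝ 1 fun y => fderiv ℝ f (gradient u y) (b i) :=
    ((hf.fderiv_right (m := 1) (by norm_num)).comp
      (contDiff_gradient hu (by norm_num))).clm_apply contDiff_const
  rw [← integral_sum_fderiv_mul_fderiv_eq_zero_of_divergence_eq_zero (μ := μ) hσ heq hφ hφc v]
  refine integral_congr_ae (.of_forall fun x => ?_)
  simp only [fderiv_fderiv_gradient_apply hf hu, gradient_fderiv_apply hu]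
  conv_lhs => rw [← b.sum_repr' (gradient φ x)]
  simp only [map_sum, map_smul, smul_eq_mul, real_inner_comm, inner_gradient_left, mul_comm]

end LinearizedEquation

section PlanarHessian

variable {V ι : Type*} [NormedAddCommGroup V] [InnerProductSpace ℝ V]

lemma exists_eq_smul_of_isSymmetric_of_apply_eq_zero (hV : Module.finrank ℝ V = 2)
    {T : V →ₗ[ℝ] V} (hT : T.IsSymmetric) {E : V} (hE : E ≠ 0) (hTE : T E = 0) :
    ∃ ν ≠ 0, ∃ h : ℝ, ∀ v, T v = (h * inner ℝ ν v) • ν := by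
  have : Fact (Module.finrank ℝ V = 1 + 1) := ⟨hV⟩
  obtain ⟨⟨ν, hνE⟩, hν, hspan⟩ :=
    finrank_eq_one_iff'.1 (Submodule.finrank_orthogonal_span_singleton (𝕜 := ℝ) hE)
  have hrange (v : V) : ∃ c : ℝ, T v = c • ν := by
    obtain ⟨c, hc⟩ := hspan ⟨T v, Submodule.mem_orthogonal_singleton_iff_inner_right.2 <| by
      rw [← hT, hTE, inner_zero_left]⟩
    exact ⟨c, (congrArg Subtype.val hc).symm⟩
  have hν0 : ν ≠ 0 := fun h => hν (Subtype.ext h)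
  have hνν : inner ℝ ν ν ≠ 0 := inner_self_ne_zero.2 hν0
  obtain ⟨k, hk⟩ := hrange ν
  refine ⟨ν, hν0, k / inner ℝ ν ν, fun v => ?_⟩
  obtain ⟨c, hc⟩ := hrange v
  have hpair : c * inner ℝ ν ν = k * inner ℝ ν v := by
    rw [← real_inner_smul_right, ← hc, ← hT, hk, real_inner_smul_left]
  rw [hc, div_mul_eq_mul_div, ← hpair, mul_div_cancel_right₀ _ hνν]

lemma eq_zero_of_isSymmetric_of_sum_apply_eq_zero [Fintype ι] (b : OrthonormalBasis ι ℝ V)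
    (hV : Module.finrank ℝ V = 2) {B : V →ₗ[ℝ] V →ₗ[ℝ] ℝ} (hB : ∀ q ≠ 0, 0 < B q q)
    {T : V →ₗ[ℝ] V} (hT : T.IsSymmetric) (hsum : ∑ i, B (T (b i)) (b i) = 0) {E : V}
    (hE : E ≠ 0) (hTE : T E = 0) : T = 0 := by
  obtain ⟨ν, hν, h, hTν⟩ := exists_eq_smul_of_isSymmetric_of_apply_eq_zero hV hT hE hTE
  have htrace : h * B ν ν = 0 := by
    calc h * B ν ν = h * B ν (∑ i, inner ℝ (b i) ν • b i) := by rw [b.sum_repr']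
      _ = ∑ i, B (T (b i)) (b i) := by
        simp [hTν, Finset.mul_sum, real_inner_comm, mul_assoc]
      _ = 0 := hsum
  have hh : h = 0 := (mul_eq_zero.1 htrace).resolve_right (hB ν hν).ne'
  ext v
  simp [hTν, hh]

end PlanarHessian

section PlanarSolutions

variable {V ι : Type*} [NormedAddCommGroup V] [InnerProductSpace ℝ V] [Fintype ι]
  {f u : V → ℝ} {b : OrthonormalBasis ι ℝ V} {E : V}

lemma fderiv_gradient_eq_zero_of_apply_eq_zero [CompleteSpace V] (hV : Module.finrank ℝ V = 2)
    (hf : ContDiff ℝ 2 f) (hpos : ∀ p q : V, q ≠ 0 → 0 < fderiv ℝ (fderiv ℝ f) p q q)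
    (hu : ContDiff ℝ 2 u)
    (heq : ∀ x, ∑ i, fderiv ℝ (fun y => fderiv ℝ f (gradient u y) (b i)) x (b i) = 0)
    (hE : E ≠ 0) {x : V} (hx : fderiv ℝ (gradient u) x E = 0) :
    fderiv ℝ (gradient u) x = 0 := by
  have htrace := heq x
  simp only [fderiv_fderiv_gradient_apply hf hu] at htrace
  exact ContinuousLinearMap.coe_injective <|
    eq_zero_of_isSymmetric_of_sum_apply_eq_zero b hV
      (B := (fderiv ℝ (fderiv ℝ f) (gradient u x)).toLinearMap₁₂) (hpos _)
      (isSymmetric_fderiv_gradient hu x) htrace hE hx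

lemma fderiv_gradient_apply_eq_zero [FiniteDimensional ℝ V] (hV : Module.finrank ℝ V = 2)
    (hf : ContDiff ℝ 2 f) (hpos : ∀ p q : V, q ≠ 0 → 0 < fderiv ℝ (fderiv ℝ f) p q q)
    {Λ s : ℝ} (hgrow : ∀ p q : V,
      fderiv ℝ (fderiv ℝ f) p q q ≤ Λ * (1 + ‖p‖) ^ (-s) * ‖q‖ ^ 2)
    (hu : ContDiff ℝ 2 u)
    (heq : ∀ x, ∑ i, fderiv ℝ (fun y => fderiv ℝ f (gradient u y) (b i)) x (b i) = 0)
    {m K : ℝ} (hm : 0 ≤ m) (hms : m < s)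
    (hbd : ∀ x, |fderiv ℝ u x E| ≤ K * (1 + ‖gradient u x‖) ^ m) (x : V) :
    fderiv ℝ (gradient u) x E = 0 := by
  borelize V
  have hnonneg (p q : V) : 0 ≤ fderiv ℝ (fderiv ℝ f) p q q := by
    rcases eq_or_ne q 0 with rfl | hq
    · simp
    · exact (hpos p q hq).le
  have harsinh (t : ℝ) : 0 < deriv arsinh t := by
    rw [deriv_arsinh]
    positivity
  obtain ⟨M, hM⟩ := exists_arsinh_sq_le_rpow_mul_deriv_arsinh hm hms K
  have hbound (x q : V) : arsinh (fderiv ℝ u x E) ^ 2 *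
      fderiv ℝ (fderiv ℝ f) (gradient u x) q q
        ≤ M * Λ * deriv arsinh (fderiv ℝ u x E) * ‖q‖ ^ 2 := by
    have hsq := hM _ _ (norm_nonneg _) (hbd x)
    calc arsinh (fderiv ℝ u x E) ^ 2 * fderiv ℝ (fderiv ℝ f) (gradient u x) q q
        ≤ M * (1 + ‖gradient u x‖) ^ s * deriv arsinh (fderiv ℝ u x E) *
            (Λ * (1 + ‖gradient u x‖) ^ (-s) * ‖q‖ ^ 2) :=
          mul_le_mul hsq (hgrow _ _) (hnonneg _ _) ((sq_nonneg _).trans hsq)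
      _ = M * Λ * deriv arsinh (fderiv ℝ u x E) * ‖q‖ ^ 2 := by
        rw [rpow_neg (by positivity)]
        field_simp
  have henergy := (isWeakSolution_fderiv_apply (μ := Measure.addHaar) hf hu heq E).energy_eq_zero
    hV (((hf.fderiv_right (m := 1) (by norm_num)).continuous_fderiv one_ne_zero).comp
      (contDiff_gradient (m := 1) hu (by norm_num)).continuous)
    (fun x => fderiv_fderiv_comm hf _) (fun x => hnonneg _)
    ((hu.fderiv_right (by norm_num)).clm_apply contDiff_const) contDiff_arsinh
    harsinh hbound x
  rw [gradient_fderiv_apply hu] at henergy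
  by_contra hne
  exact (hpos _ _ hne).ne' henergy

end PlanarSolutions

lemma hess_eq_fderiv_fderiv (f : E2 → ℝ) (p q : E2) :
    Hess f p q = fderiv ℝ (fderiv ℝ f) p q q := by
  simp [Hess, iteratedFDeriv_two_apply]

lemma ee_eq_basisFun (i : Fin 2) : ee i = EuclideanSpace.basisFun (Fin 2) ℝ i := by
  simp [ee]

theorem statement14_general (f u : E2 → ℝ)
    (hf : ContDiff ℝ 2 f)
    (hpos : ∀ p q : E2, q ≠ 0 → 0 < Hess f p q)
    (Λ s : ℝ) (hgrow : ∀ p q : E2, Hess f p q ≤ Λ * (1 + ‖p‖) ^ (-s) * ‖q‖ ^ 2)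
    (hu : ContDiff ℝ 2 u) (heq : solves f u)
    (E : E2) (hE : E ≠ 0)
    (m K : ℝ) (hm : 0 ≤ m) (hms : m < s)
    (hbd : ∀ x : E2, |fderiv ℝ u x E| ≤ K * (1 + ‖gradient u x‖) ^ m) :
    ∃ a b c : ℝ, ∀ x : E2, u x = a * x 0 + b * x 1 + c := by
  simp only [hess_eq_fderiv_fderiv] at hpos hgrow
  simp only [solves, ee_eq_basisFun] at heq
  have hV : Module.finrank ℝ E2 = 2 := finrank_euclideanSpace_fin
  have hker := fderiv_gradient_apply_eq_zero hV hf hpos hgrow hu heq hm hms hbd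
  obtain ⟨a, c, hac⟩ := exists_eq_inner_add_of_fderiv_gradient_eq_zero hu fun x =>
    fderiv_gradient_eq_zero_of_apply_eq_zero hV hf hpos hu heq hE (hker x)
  exact ⟨a 0, a 1, c, fun x => by simp [hac, PiLp.inner_apply, mul_comm]⟩

theorem statement14 (f u : E2 → ℝ)
    (hf : ContDiff ℝ 2 f)
    (hpos : ∀ p q : E2, q ≠ 0 → 0 < Hess f p q)
    (lam : ℝ) (hlam : 0 < lam)
    (hgrow : ∀ p q : E2, Hess f p q ≤ lam * (Real.log (2 + ‖p‖) / (1 + ‖p‖)) * ‖q‖ ^ 2)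
    (hu : ContDiff ℝ 2 u) (heq : solves f u)
    (E₁ E₂ : E2) (hli : LinearIndependent ℝ ![E₁, E₂])
    (m K : ℝ) (hm0 : 0 ≤ m) (hm1 : m < 1) (hK : 0 < K)
    (hbd : ∀ x : E2, |fderiv ℝ u x E₁| ≤ K * (|fderiv ℝ u x E₂| ^ m + 1)) :
    ∃ a b c : ℝ, ∀ x : E2, u x = a * x 0 + b * x 1 + c := by
  obtain ⟨s, hms, hs1⟩ := exists_between hm1
  refine statement14_general f u hf hpos (lam * (2 ^ (1 - s) / (1 - s))) s (fun p q => ?_) hu heq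
    E₁ (hli.ne_zero 0) m (K * (‖E₂‖ ^ m + 1)) hm0 hms fun x => ?_
  · calc Hess f p q ≤ lam * (log (2 + ‖p‖) / (1 + ‖p‖)) * ‖q‖ ^ 2 := hgrow p q
      _ ≤ lam * (2 ^ (1 - s) / (1 - s) * (1 + ‖p‖) ^ (-s)) * ‖q‖ ^ 2 := by
        gcongr
        exact log_two_add_div_one_add_le (norm_nonneg p) hs1
      _ = lam * (2 ^ (1 - s) / (1 - s)) * (1 + ‖p‖) ^ (-s) * ‖q‖ ^ 2 := by ring
  · rw [mul_assoc K, norm_gradient_eq_norm_fderiv]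
    exact (hbd x).trans (mul_le_mul_of_nonneg_left (abs_fderiv_rpow_add_one_le hm0 u x E₂) hK.le)
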